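/- Let ω ∈ ℝ^ℤ be non-resonant and H = D_ω + Z + R with Z ∈ 𝓚 ∩ 𝓕^{≥2}, R ∈ 𝓕^{≥d}, d ≥ 1, and let Z_H ∈ 𝓚 be its unique Birkhoff normal form. If for some G ∈ 𝓕^{≥1} one has e^{{G,·}} H = D_ω + Z' + R' with Z' ∈ 𝓚 and R' ∈ 𝓕^{≥d₁}, then Z' − Z_H ∈ 𝓚 ∩ 𝓕^{≥d₁}. -/

import Mathlib

open scoped BigOperators ENNReal

/-- The index set `ℕ^ℤ_f`: finitely supported functions `ℤ → ℕ`. -/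
abbrev Idx : Type := ℤ →₀ ℕ

/-- Coefficient families of formal Hamiltonians. -/
abbrev Coeffs : Type := Idx → Idx → ℂ

/-- `|α| = ∑_j α_j`. -/
def wt (α : Idx) : ℕ := α.sum fun _ n => n

/-- The momentum `π(α,β) = ∑_j j (α_j - β_j)`. -/
def mom (α β : Idx) : ℤ := (α.sum fun j n => j * (n : ℤ)) - (β.sum fun j n => j * (n : ℤ))

/-- Membership in the space `𝓕` of formal Hamiltonians: vanishing of the
constant and linear coefficients, reality and momentum conservation. -/
def InF (H : Coeffs) : Prop :=
  H 0 0 = 0 ∧ H (Finsupp.single 0 1) 0 = 0 ∧ H 0 (Finsupp.single 0 1) = 0 ∧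
    (∀ α β, H α β = (starRingEnd ℂ) (H β α)) ∧ (∀ α β, mom α β ≠ 0 → H α β = 0)

/-- Membership in `𝓕^{≥d}`: supported on pairs with `|α|+|β| ≥ d+2`. -/
def InFge (d : ℕ) (H : Coeffs) : Prop :=
  InF H ∧ ∀ α β, wt α + wt β < d + 2 → H α β = 0

/-- Membership in `𝓚`: supported on the diagonal `{α = β}`. -/
def InK (H : Coeffs) : Prop := InF H ∧ ∀ α β, α ≠ β → H α β = 0

/-- Membership in `𝓡`: supported off the diagonal. -/
def InR (H : Coeffs) : Prop := InF H ∧ ∀ α, H α α = 0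

/-- A single term of the Poisson-bracket double sum `{F,G}_{α,β}`, indexed by
`x = (j, ((α¹,β¹), (α²,β²)))`: it is
`F_{α¹,β¹} G_{α²,β²} (α¹_j β²_j − β¹_j α²_j)` when `π(α¹,β¹) = π(α²,β²) = 0`,
`α = α¹+α²−e_j` and `β = β¹+β²−e_j`, and `0` otherwise. -/
noncomputable def bracketTerm (F G : Coeffs) (α β : Idx)
    (x : ℤ × (Idx × Idx) × (Idx × Idx)) : ℂ :=
  if mom x.2.1.1 x.2.1.2 = 0 ∧ mom x.2.2.1 x.2.2.2 = 0 ∧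
      α = x.2.1.1 + x.2.2.1 - Finsupp.single x.1 1 ∧
      β = x.2.1.2 + x.2.2.2 - Finsupp.single x.1 1 then
    F x.2.1.1 x.2.1.2 * G x.2.2.1 x.2.2.2 *
      ((x.2.1.1 x.1 : ℂ) * (x.2.2.2 x.1 : ℂ) - (x.2.1.2 x.1 : ℂ) * (x.2.2.1 x.1 : ℂ))
  else 0

/-- The Poisson bracket `{F,G}`, defined coefficientwise by
`{F,G}_{α,β} = i ∑_x bracketTerm F G α β x` (a sum with finitely many
nonzero terms, so the `finsum` gives the intended value). -/
noncomputable def bracket (F G : Coeffs) : Coeffs := fun α β =>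
  Complex.I * ∑ᶠ x : ℤ × (Idx × Idx) × (Idx × Idx), bracketTerm F G α β x

/-- Iterates `ad_G^k`. -/
noncomputable def adPow (G : Coeffs) : ℕ → Coeffs → Coeffs
  | 0, H => H
  | k + 1, H => bracket G (adPow G k H)

/-- The formal symplectic change of variables `e^{{G,·}} = ∑_{k≥0} ad_G^k / k!`;
for `G ∈ 𝓕^{≥1}` each coefficient receives only finitely many nonzero
contributions, so the `finsum` gives the intended value. -/
noncomputable def expAd (G H : Coeffs) : Coeffs := fun α β =>
  ∑ᶠ k : ℕ, ((k.factorial : ℂ))⁻¹ * adPow G k H α β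

/-- The quadratic Hamiltonian `D_ω = ∑_j ω_j |u_j|²`, whose only nonzero
coefficients are `(D_ω)_{e_j,e_j} = ω_j`. -/
noncomputable def Dom (ω : ℤ → ℝ) : Coeffs := fun α β =>
  ∑ᶠ j : ℤ, if α = Finsupp.single j 1 ∧ β = Finsupp.single j 1 then (ω j : ℂ) else 0

/-- Non-resonance: every non-trivial finite integer combination of `ω` is nonzero. -/
def NonResonant (ω : ℤ → ℝ) : Prop :=
  ∀ ℓ : ℤ →₀ ℤ, ℓ ≠ 0 → (ℓ.sum fun j c => ω j * (c : ℝ)) ≠ 0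

/-! ### Elementary facts on weights and momenta -/

lemma wt_add (a b : Idx) : wt (a + b) = wt a + wt b :=
  Finsupp.sum_add_index' (fun _ => rfl) (fun _ _ _ => rfl)

lemma wt_single (j : ℤ) : wt (Finsupp.single j 1) = 1 := by
  simp [wt]

/-- The one-sided momentum. -/
def mz (a : Idx) : ℤ := a.sum fun j n => j * (n : ℤ)

lemma mom_eq (a b : Idx) : mom a b = mz a - mz b := rfl

lemma mz_add (a b : Idx) : mz (a + b) = mz a + mz b :=
  Finsupp.sum_add_index' (fun _ => by simp) (fun _ _ _ => by push_cast; ring)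

lemma mz_single (j : ℤ) : mz (Finsupp.single j 1) = j := by
  simp [mz]

/-- Total degree of a pair. -/
def dg (p : Idx × Idx) : ℕ := wt p.1 + wt p.2

/-- The weight in the bracket. -/
noncomputable def cf (j : ℤ) (p q : Idx × Idx) : ℂ :=
  (p.1 j : ℂ) * (q.2 j : ℂ) - (p.2 j : ℂ) * (q.1 j : ℂ)

/-- The output index of the bracket. -/
noncomputable def outp (j : ℤ) (p q : Idx × Idx) : Idx × Idx :=
  (p.1 + q.1 - Finsupp.single j 1, p.2 + q.2 - Finsupp.single j 1)

lemma cf_le {j : ℤ} {p q : Idx × Idx} (h : cf j p q ≠ 0) :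
    1 ≤ p.1 j + q.1 j ∧ 1 ≤ p.2 j + q.2 j := by
  by_contra hc
  apply h
  unfold cf
  have : (p.1 j = 0 ∧ q.1 j = 0) ∨ (p.2 j = 0 ∧ q.2 j = 0) := by omega
  rcases this with ⟨h1, h2⟩ | ⟨h1, h2⟩ <;> simp [h1, h2]

lemma tsub_single_add {a : Idx} {j : ℤ} (h : 1 ≤ a j) :
    a - Finsupp.single j 1 + Finsupp.single j 1 = a := by
  apply tsub_add_cancel_of_le
  simpa using h

lemma outp_add1 {j : ℤ} {p q : Idx × Idx} (h : cf j p q ≠ 0) :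
    (outp j p q).1 + Finsupp.single j 1 = p.1 + q.1 :=
  tsub_single_add (by simpa using (cf_le h).1)

lemma outp_add2 {j : ℤ} {p q : Idx × Idx} (h : cf j p q ≠ 0) :
    (outp j p q).2 + Finsupp.single j 1 = p.2 + q.2 :=
  tsub_single_add (by simpa using (cf_le h).2)

lemma dg_outp {j : ℤ} {p q : Idx × Idx} (h : cf j p q ≠ 0) :
    dg (outp j p q) + 2 = dg p + dg q := by
  have h1 := congrArg wt (outp_add1 h)
  have h2 := congrArg wt (outp_add2 h)
  simp only [wt_add, wt_single] at h1 h2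
  unfold dg
  omega

lemma mom_outp {j : ℤ} {p q : Idx × Idx} (h : cf j p q ≠ 0) :
    mom (outp j p q).1 (outp j p q).2 = mom p.1 p.2 + mom q.1 q.2 := by
  have h1 := congrArg mz (outp_add1 h)
  have h2 := congrArg mz (outp_add2 h)
  simp only [mz_add, mz_single] at h1 h2
  simp only [mom_eq]
  omega

/-! ### The bracket as a finite sum -/

/-- Index triples contributing to the bracket. -/
def bset (α β : Idx) : Set (ℤ × (Idx × Idx) × (Idx × Idx)) :=
  {x | (mom x.2.1.1 x.2.1.2 = 0 ∧ mom x.2.2.1 x.2.2.2 = 0 ∧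
      α = x.2.1.1 + x.2.2.1 - Finsupp.single x.1 1 ∧
      β = x.2.1.2 + x.2.2.2 - Finsupp.single x.1 1) ∧ cf x.1 x.2.1 x.2.2 ≠ 0}

lemma split_idx {a b c : Idx} {j : ℤ} (h : c + Finsupp.single j 1 = a + b) (ha : a j ≠ 0) :
    ∃ s, a = s + Finsupp.single j 1 ∧ s + b = c := by
  refine ⟨a - Finsupp.single j 1, (tsub_single_add (by omega)).symm, ?_⟩
  have h1 := tsub_single_add (a := a) (j := j) (by omega)
  apply add_right_cancel (b := Finsupp.single j 1)
  rw [h, add_right_comm, h1]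

lemma bset_finite (α β : Idx) : (bset α β).Finite := by
  classical
  let f : (Idx × Idx) × (Idx × Idx) → ℤ × (Idx × Idx) × (Idx × Idx) := fun y =>
    (mz y.2.2 - mz y.1.1,
      (y.1.1 + Finsupp.single (mz y.2.2 - mz y.1.1) 1, y.2.2),
      (y.1.2, y.2.1 + Finsupp.single (mz y.2.2 - mz y.1.1) 1))
  let g : (Idx × Idx) × (Idx × Idx) → ℤ × (Idx × Idx) × (Idx × Idx) := fun y =>
    ((f y).1, (f y).2.2, (f y).2.1)
  let T := Finset.HasAntidiagonal.antidiagonal α ×ˢ Finset.HasAntidiagonal.antidiagonal β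
  apply Set.Finite.subset ((T.image f ∪ T.image g).finite_toSet)
  rintro ⟨j, ⟨a1, b1⟩, ⟨a2, b2⟩⟩ ⟨⟨h1, h2, h3, h4⟩, hc⟩
  have e1 := outp_add1 hc
  have e2 := outp_add2 hc
  simp only [outp] at e1 e2
  simp only at h1 h2 h3 h4
  rw [← h3] at e1
  rw [← h4] at e2
  simp only [Finset.coe_union, Finset.coe_image, Set.mem_union, Set.mem_image]
  by_cases h : a1 j ≠ 0 ∧ b2 j ≠ 0
  · left
    obtain ⟨s, rfl, hs⟩ := split_idx e1 h.1
    obtain ⟨t, rfl, ht⟩ := split_idx (e2.trans (add_comm _ _)) h.2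
    have hj : j = mz b1 - mz s := by
      rw [mom_eq, mz_add, mz_single] at h1; omega
    refine ⟨((s, a2), (t, b1)), by simp [T, hs, ht], ?_⟩
    simp [f, ← hj]
  · right
    have h' : b1 j ≠ 0 ∧ a2 j ≠ 0 := by
      by_contra h'
      apply hc
      simp only [cf]
      have i1 : a1 j * b2 j = 0 := by by_contra hh; exact h (mul_ne_zero_iff.1 hh)
      have i2 : b1 j * a2 j = 0 := by by_contra hh; exact h' (mul_ne_zero_iff.1 hh)
      rw [← Nat.cast_mul, ← Nat.cast_mul, i1, i2]; simp
    obtain ⟨s, rfl, hs⟩ := split_idx (e1.trans (add_comm _ _)) h'.2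
    obtain ⟨t, rfl, ht⟩ := split_idx e2 h'.1
    have hj : j = mz b2 - mz s := by
      rw [mom_eq, mz_add, mz_single] at h2; omega
    refine ⟨((s, a1), (t, b2)), by simp [T, hs, ht], ?_⟩
    simp [g, f, ← hj]

lemma bracket_eq (F G : Coeffs) (α β : Idx) :
    bracket F G α β = Complex.I * ∑ x ∈ (bset_finite α β).toFinset,
      F x.2.1.1 x.2.1.2 * G x.2.2.1 x.2.2.2 * cf x.1 x.2.1 x.2.2 := by
  unfold bracket
  rw [finsum_eq_sum_of_support_subset (s := (bset_finite α β).toFinset)]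
  · congr 1
    refine Finset.sum_congr rfl fun x hx => ?_
    simp only [Set.Finite.mem_toFinset] at hx
    unfold bracketTerm
    rw [if_pos hx.1]; rfl
  · intro x hx
    simp only [Set.Finite.coe_toFinset]
    by_contra hn
    apply hx
    unfold bracketTerm
    split_ifs with h
    · have : cf x.1 x.2.1 x.2.2 = 0 := by
        by_contra hc
        exact hn ⟨h, hc⟩
      unfold cf at this
      rw [this, mul_zero]
    · rfl

lemma bset_out {α β : Idx} {x : ℤ × (Idx × Idx) × (Idx × Idx)} (h : x ∈ bset α β) :
    (α, β) = outp x.1 x.2.1 x.2.2 := by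
  obtain ⟨⟨_, _, h3, h4⟩, _⟩ := h
  exact Prod.ext h3 h4

lemma bset_dg {α β : Idx} {x : ℤ × (Idx × Idx) × (Idx × Idx)} (h : x ∈ bset α β) :
    wt α + wt β + 2 = dg x.2.1 + dg x.2.2 := by
  have := dg_outp h.2
  rwa [← bset_out h] at this

/-- Congruence principle for brackets. -/
lemma bracket_congr {F G F' G' : Coeffs} {α β : Idx}
    (h : ∀ j p q, mom p.1 p.2 = 0 → mom q.1 q.2 = 0 → (α, β) = outp j p q → cf j p q ≠ 0 →
      wt α + wt β + 2 = dg p + dg q →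
      F p.1 p.2 * G q.1 q.2 * cf j p q = F' p.1 p.2 * G' q.1 q.2 * cf j p q) :
    bracket F G α β = bracket F' G' α β := by
  rw [bracket_eq, bracket_eq]
  congr 1
  refine Finset.sum_congr rfl fun x hx => ?_
  simp only [Set.Finite.mem_toFinset] at hx
  exact h x.1 x.2.1 x.2.2 hx.1.1 hx.1.2.1 (bset_out hx) hx.2 (bset_dg hx)

lemma bracket_eq_zero {F G : Coeffs} {α β : Idx}
    (h : ∀ j p q, mom p.1 p.2 = 0 → mom q.1 q.2 = 0 → (α, β) = outp j p q → cf j p q ≠ 0 →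
      wt α + wt β + 2 = dg p + dg q → F p.1 p.2 * G q.1 q.2 = 0) :
    bracket F G α β = 0 := by
  rw [bracket_eq, Finset.sum_eq_zero, mul_zero]
  intro x hx
  simp only [Set.Finite.mem_toFinset] at hx
  rw [h x.1 x.2.1 x.2.2 hx.1.1 hx.1.2.1 (bset_out hx) hx.2 (bset_dg hx), zero_mul]

/-- The bracket as a bilinear map. -/
noncomputable def Bk : Coeffs →ₗ[ℂ] Coeffs →ₗ[ℂ] Coeffs :=
  LinearMap.mk₂ ℂ bracket
    (by
      intro F F' G; ext α β
      simp only [bracket_eq, Pi.add_apply, add_mul, Finset.sum_add_distrib, mul_add])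
    (by
      intro c F G; ext α β
      simp only [bracket_eq, Pi.smul_apply, smul_eq_mul, Finset.mul_sum]
      exact Finset.sum_congr rfl fun x _ => by ring)
    (by
      intro F G G'; ext α β
      simp only [bracket_eq, Pi.add_apply, add_mul, Finset.sum_add_distrib, mul_add])
    (by
      intro c F G; ext α β
      simp only [bracket_eq, Pi.smul_apply, smul_eq_mul, Finset.mul_sum]
      exact Finset.sum_congr rfl fun x _ => by ring)

lemma Bk_apply (F G : Coeffs) : Bk F G = bracket F G := rfl

/-! ### Jacobi identity -/

/-- Monomials. -/
noncomputable def dl (p : Idx × Idx) : Coeffs := fun α β => if (α, β) = p then 1 else 0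

/-- Local functionals: depending on finitely many coefficients only. -/
def Loc (f : Coeffs →ₗ[ℂ] ℂ) : Prop :=
  ∃ T : Finset (Idx × Idx), ∀ F : Coeffs, (∀ p ∈ T, F p.1 p.2 = 0) → f F = 0

lemma Loc.eq_zero {f : Coeffs →ₗ[ℂ] ℂ} (hf : Loc f) (h : ∀ p, f (dl p) = 0) (F : Coeffs) :
    f F = 0 := by
  obtain ⟨T, hT⟩ := hf
  have h1 : f (F - ∑ p ∈ T, F p.1 p.2 • dl p) = 0 := by
    apply hT
    intro p hp
    simp only [Pi.sub_apply, Finset.sum_apply, Pi.smul_apply, dl, smul_eq_mul]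
    rw [Finset.sum_eq_single p]
    · simp
    · intro q _ hq
      rw [if_neg (fun h => hq h.symm), mul_zero]
    · intro h; exact absurd hp h
  rw [map_sub, map_sum] at h1
  simpa [h] using h1

lemma Loc.add {f g : Coeffs →ₗ[ℂ] ℂ} (hf : Loc f) (hg : Loc g) : Loc (f + g) := by
  classical
  obtain ⟨T, hT⟩ := hf
  obtain ⟨U, hU⟩ := hg
  refine ⟨T ∪ U, fun F hF => ?_⟩
  rw [LinearMap.add_apply, hT F fun p hp => hF p (Finset.mem_union_left _ hp),
    hU F fun p hp => hF p (Finset.mem_union_right _ hp), add_zero]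

lemma Loc.neg {f : Coeffs →ₗ[ℂ] ℂ} (hf : Loc f) : Loc (-f) := by
  obtain ⟨T, hT⟩ := hf
  refine ⟨T, fun F hF => ?_⟩
  rw [LinearMap.neg_apply, hT F hF, neg_zero]

/-- Coefficient functional. -/
def ev (p : Idx × Idx) : Coeffs →ₗ[ℂ] ℂ where
  toFun F := F p.1 p.2
  map_add' _ _ := rfl
  map_smul' _ _ := rfl

/-- Local operators. -/
def LocOp (A : Coeffs →ₗ[ℂ] Coeffs) : Prop := ∀ p, Loc (ev p ∘ₗ A)

lemma LocOp.comp {A B : Coeffs →ₗ[ℂ] Coeffs} (hA : LocOp A) (hB : LocOp B) :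
    LocOp (A ∘ₗ B) := by
  classical
  intro p
  obtain ⟨T, hT⟩ := hA p
  choose U hU using hB
  refine ⟨T.biUnion U, fun F hF => ?_⟩
  apply hT (B F)
  intro q hq
  exact hU q F fun r hr => hF r (Finset.mem_biUnion.2 ⟨q, hq, hr⟩)

lemma LocOp_Bk (F : Coeffs) : LocOp (Bk F) := by
  classical
  intro p
  refine ⟨(bset_finite p.1 p.2).toFinset.image (fun x => x.2.2), fun G hG => ?_⟩
  show bracket F G p.1 p.2 = 0
  rw [bracket_eq, Finset.sum_eq_zero, mul_zero]
  intro x hx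
  rw [hG x.2.2 (Finset.mem_image_of_mem _ hx), mul_zero, zero_mul]

lemma LocOp_Bk_flip (G : Coeffs) : LocOp (Bk.flip G) := by
  classical
  intro p
  refine ⟨(bset_finite p.1 p.2).toFinset.image (fun x => x.2.1), fun F hF => ?_⟩
  show bracket F G p.1 p.2 = 0
  rw [bracket_eq, Finset.sum_eq_zero, mul_zero]
  intro x hx
  rw [hF x.2.1 (Finset.mem_image_of_mem _ hx), zero_mul, zero_mul]

lemma bracket_dl {p q : Idx × Idx} (hp : mom p.1 p.2 = 0) (hq : mom q.1 q.2 = 0)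
    (J : Finset ℤ) (hJ : ∀ j, cf j p q ≠ 0 → j ∈ J) :
    bracket (dl p) (dl q) = ∑ j ∈ J, (Complex.I * cf j p q) • dl (outp j p q) := by
  classical
  ext α β
  unfold bracket
  rw [finsum_eq_sum_of_support_subset (s := J.image fun j => (j, p, q))]
  · rw [Finset.sum_image (by intro a _ b _ h; exact (Prod.ext_iff.1 h).1), Finset.mul_sum]
    simp only [Finset.sum_apply, Pi.smul_apply, smul_eq_mul]
    refine Finset.sum_congr rfl fun j _ => ?_
    simp only [bracketTerm, dl, hp, hq, outp, Prod.mk.injEq, true_and, cf]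
    split_ifs <;> simp
  · rintro ⟨j, p', q'⟩ hx
    have hx' : bracketTerm (dl p) (dl q) α β (j, p', q') ≠ 0 := hx
    unfold bracketTerm at hx'
    split_ifs at hx' with h
    · have h1 := left_ne_zero_of_mul hx'
      have h2 : cf j p' q' ≠ 0 := right_ne_zero_of_mul hx'
      have h3 : p' = p := by
        by_contra hh
        apply left_ne_zero_of_mul h1
        exact if_neg hh
      have h4 : q' = q := by
        by_contra hh
        apply right_ne_zero_of_mul h1
        exact if_neg hh
      subst h3 h4
      simp [hJ j h2]
    · exact absurd rfl hx'

lemma bracket_dl_zero_left {p : Idx × Idx} (hp : mom p.1 p.2 ≠ 0) (F : Coeffs) :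
    bracket (dl p) F = 0 := by
  ext α β
  apply bracket_eq_zero
  intro j p' q' h1 _ _ _ _
  have : dl p p'.1 p'.2 = 0 := if_neg (by rintro rfl; exact hp h1)
  rw [this, zero_mul]

lemma bracket_dl_zero_right {p : Idx × Idx} (hp : mom p.1 p.2 ≠ 0) (F : Coeffs) :
    bracket F (dl p) = 0 := by
  ext α β
  apply bracket_eq_zero
  intro j p' q' _ h1 _ _ _
  have : dl p q'.1 q'.2 = 0 := if_neg (by rintro rfl; exact hp h1)
  rw [this, mul_zero]

lemma cf_supp {j : ℤ} {p q : Idx × Idx} (h : cf j p q ≠ 0) :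
    j ∈ p.1.support ∪ p.2.support ∧ j ∈ q.1.support ∪ q.2.support := by
  simp only [Finset.mem_union, Finsupp.mem_support_iff]
  constructor <;>
  · by_contra hc
    push Not at hc
    apply h
    simp [cf, hc.1, hc.2]

lemma cf_swap (j : ℤ) (p q : Idx × Idx) : cf j p q = - cf j q p := by
  unfold cf; ring

lemma outp_swap (j : ℤ) (p q : Idx × Idx) : outp j p q = outp j q p := by
  unfold outp; rw [add_comm p.1, add_comm p.2]

/-- Expansion of the second level bracket coefficients. -/
lemma cf_outp (j k : ℤ) (p q r : Idx × Idx) :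
    cf k q r * cf j p (outp k q r) = cf k q r * (cf j p q + cf j p r -
      if j = k then ((p.1 j : ℂ) - p.2 j) else 0) := by
  by_cases h : cf k q r = 0
  · rw [h]; simp
  congr 1
  have h1 := DFunLike.congr_fun (outp_add1 h) j
  have h2 := DFunLike.congr_fun (outp_add2 h) j
  simp only [Finsupp.add_apply, Finsupp.single_apply] at h1 h2
  have h1' := congrArg (Nat.cast : ℕ → ℂ) h1
  have h2' := congrArg (Nat.cast : ℕ → ℂ) h2
  push_cast at h1' h2'
  unfold cf
  split_ifs at h1' h2' ⊢ with e1 e2 e2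
  · rw [eq_sub_of_add_eq h1', eq_sub_of_add_eq h2']; ring
  · exact absurd e1.symm e2
  · exact absurd e2.symm e1
  · rw [add_zero] at h1' h2'; rw [h1', h2']; ring

lemma outp_outp {k : ℤ} (j : ℤ) {p q r : Idx × Idx} (h : cf k q r ≠ 0) :
    outp j p (outp k q r) = (p.1 + q.1 + r.1 - Finsupp.single k 1 - Finsupp.single j 1,
      p.2 + q.2 + r.2 - Finsupp.single k 1 - Finsupp.single j 1) := by
  have h1 : Finsupp.single k 1 ≤ q.1 + r.1 := by simpa using (cf_le h).1
  have h2 : Finsupp.single k 1 ≤ q.2 + r.2 := by simpa using (cf_le h).2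
  simp only [outp]
  rw [add_assoc, add_assoc, add_tsub_assoc_of_le h1, add_tsub_assoc_of_le h2]

/-- Double brackets of monomials. -/
lemma bracket_dl2 {p q r : Idx × Idx} (hp : mom p.1 p.2 = 0) (hq : mom q.1 q.2 = 0)
    (hr : mom r.1 r.2 = 0) (J : Finset ℤ)
    (hJp : p.1.support ∪ p.2.support ⊆ J) (hJq : q.1.support ∪ q.2.support ⊆ J) :
    bracket (dl p) (bracket (dl q) (dl r)) = ∑ k ∈ J, ∑ j ∈ J,
      (- (cf k q r * (cf j p q + cf j p r - if j = k then ((p.1 j : ℂ) - p.2 j) else 0))) •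
      dl (p.1 + q.1 + r.1 - Finsupp.single k 1 - Finsupp.single j 1,
        p.2 + q.2 + r.2 - Finsupp.single k 1 - Finsupp.single j 1) := by
  rw [bracket_dl hq hr J fun j hj => hJq (cf_supp hj).1, ← Bk_apply, map_sum]
  refine Finset.sum_congr rfl fun k _ => ?_
  by_cases h : cf k q r = 0
  · simp [h]
  rw [map_smul, Bk_apply, bracket_dl hp (by rw [mom_outp h, hq, hr, add_zero]) J
    fun j hj => hJp (cf_supp hj).1, Finset.smul_sum]
  refine Finset.sum_congr rfl fun j _ => ?_
  rw [smul_smul, outp_outp j h, ← cf_outp]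
  congr 1
  linear_combination (cf k q r * cf j p (outp k q r)) * Complex.I_mul_I

lemma bracket_swap_dl (p q : Idx × Idx) : bracket (dl p) (dl q) = - bracket (dl q) (dl p) := by
  classical
  by_cases hp : mom p.1 p.2 = 0
  swap
  · rw [bracket_dl_zero_left hp, bracket_dl_zero_right hp, neg_zero]
  by_cases hq : mom q.1 q.2 = 0
  swap
  · rw [bracket_dl_zero_left hq, bracket_dl_zero_right hq, neg_zero]
  rw [bracket_dl hp hq (p.1.support ∪ p.2.support) fun j hj => (cf_supp hj).1,
    bracket_dl hq hp (p.1.support ∪ p.2.support) fun j hj => (cf_supp hj).2,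
    ← Finset.sum_neg_distrib]
  refine Finset.sum_congr rfl fun j _ => ?_
  rw [outp_swap, cf_swap, mul_neg, neg_smul]

lemma bracket_swap (F G : Coeffs) : bracket F G = - bracket G F := by
  have h1 : ∀ p G, bracket (dl p) G = - bracket G (dl p) := by
    intro p G
    ext α β
    have := Loc.eq_zero (((LocOp_Bk (dl p)) (α, β)).add ((LocOp_Bk_flip (dl p)) (α, β)))
      (fun q => by
        show bracket (dl p) (dl q) α β + bracket (dl q) (dl p) α β = 0
        rw [bracket_swap_dl]; simp) G
    have h2 : bracket (dl p) G α β + bracket G (dl p) α β = 0 := this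
    simp only [Pi.neg_apply]
    linear_combination h2
  ext α β
  have := Loc.eq_zero (((LocOp_Bk G) (α, β)).add ((LocOp_Bk_flip G) (α, β)))
    (fun q => by
      show bracket G (dl q) α β + bracket (dl q) G α β = 0
      rw [h1]; simp) F
  have h2 : bracket G F α β + bracket F G α β = 0 := this
  simp only [Pi.neg_apply]
  linear_combination h2

lemma sum_antisymm (J : Finset ℤ) (f : ℤ → ℤ → Coeffs) (hf : ∀ k j, f k j + f j k = 0) :
    ∑ k ∈ J, ∑ j ∈ J, f k j = 0 := by
  have hs : ∑ k ∈ J, ∑ j ∈ J, f k j + ∑ k ∈ J, ∑ j ∈ J, f k j = 0 := by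
    nth_rewrite 2 [Finset.sum_comm]
    rw [← Finset.sum_add_distrib]
    refine Finset.sum_eq_zero fun k _ => ?_
    rw [← Finset.sum_add_distrib]
    exact Finset.sum_eq_zero fun j _ => hf k j
  have h2 : (2 : ℂ) • (∑ k ∈ J, ∑ j ∈ J, f k j) = 0 := by rw [two_smul, hs]
  exact (smul_eq_zero.1 h2).resolve_left two_ne_zero

lemma jacobi_dl (p q r : Idx × Idx) :
    bracket (dl p) (bracket (dl q) (dl r)) + bracket (dl q) (bracket (dl r) (dl p)) +
      bracket (dl r) (bracket (dl p) (dl q)) = 0 := by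
  classical
  have z1 : ∀ F, bracket F 0 = 0 := fun F => (Bk F).map_zero
  by_cases hp : mom p.1 p.2 = 0
  swap
  · simp [bracket_dl_zero_left hp, bracket_dl_zero_right hp, z1]
  by_cases hq : mom q.1 q.2 = 0
  swap
  · simp [bracket_dl_zero_left hq, bracket_dl_zero_right hq, z1]
  by_cases hr : mom r.1 r.2 = 0
  swap
  · simp [bracket_dl_zero_left hr, bracket_dl_zero_right hr, z1]
  set P := p.1.support ∪ p.2.support with hP
  set Q := q.1.support ∪ q.2.support with hQ
  set R := r.1.support ∪ r.2.support with hR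
  have s1 : P ⊆ P ∪ Q ∪ R := fun x hx => by simp [hx]
  have s2 : Q ⊆ P ∪ Q ∪ R := fun x hx => by simp [hx]
  have s3 : R ⊆ P ∪ Q ∪ R := fun x hx => by simp [hx]
  rw [bracket_dl2 hp hq hr (P ∪ Q ∪ R) s1 s2, bracket_dl2 hq hr hp (P ∪ Q ∪ R) s2 s3,
    bracket_dl2 hr hp hq (P ∪ Q ∪ R) s3 s1]
  set J := P ∪ Q ∪ R
  have e1 : q.1 + r.1 + p.1 = p.1 + q.1 + r.1 := by abel
  have e2 : q.2 + r.2 + p.2 = p.2 + q.2 + r.2 := by abel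
  have e3 : r.1 + p.1 + q.1 = p.1 + q.1 + r.1 := by abel
  have e4 : r.2 + p.2 + q.2 = p.2 + q.2 + r.2 := by abel
  rw [e1, e2, e3, e4]
  simp only [← Finset.sum_add_distrib, ← add_smul]
  apply sum_antisymm
  intro k j
  rw [tsub_right_comm (a := p.1 + q.1 + r.1) (b := Finsupp.single j 1),
    tsub_right_comm (a := p.2 + q.2 + r.2) (b := Finsupp.single j 1), ← add_smul]
  convert zero_smul ℂ _
  by_cases hjk : j = k
  · subst hjk
    simp only [if_true, cf]
    ring
  · simp only [if_neg hjk, if_neg (Ne.symm hjk), cf]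
    ring

/-- The Jacobi identity. -/
lemma jacobi (F G H : Coeffs) :
    bracket F (bracket G H) + bracket G (bracket H F) + bracket H (bracket F G) = 0 := by
  have key : ∀ G H : Coeffs,
      (∀ p, bracket (dl p) (bracket G H) + bracket G (bracket H (dl p)) +
        bracket H (bracket (dl p) G) = 0) → ∀ F, 
      bracket F (bracket G H) + bracket G (bracket H F) + bracket H (bracket F G) = 0 := by
    intro G H h F
    ext α β
    exact Loc.eq_zero ((((LocOp_Bk_flip (bracket G H)) (α, β)).add
      (((LocOp_Bk G).comp (LocOp_Bk H)) (α, β))).add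
      (((LocOp_Bk H).comp (LocOp_Bk_flip G)) (α, β)))
      (fun p => congrFun (congrFun (h p) α) β) F
  have rot : ∀ F G H : Coeffs,
      bracket F (bracket G H) + bracket G (bracket H F) + bracket H (bracket F G) = 0 →
      bracket G (bracket H F) + bracket H (bracket F G) + bracket F (bracket G H) = 0 := by
    intro F G H h
    rw [← h]; abel
  apply key
  intro p
  apply rot
  apply rot
  apply key
  intro q
  apply rot
  apply rot
  apply key
  intro r
  apply jacobi_dl

lemma jacobi' (F G H : Coeffs) :
    bracket F (bracket G H) - bracket G (bracket F H) = bracket (bracket F G) H := by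
  have h := jacobi F G H
  have h1 : bracket G (bracket H F) = - bracket G (bracket F H) := by
    rw [bracket_swap H F]; exact (Bk G).map_neg _
  rw [h1, bracket_swap H] at h
  rw [← sub_eq_zero, ← h]; abel

/-! ### Truncated operators -/

/-- Vanishing below degree `n`. -/
def DegGe (n : ℕ) (F : Coeffs) : Prop := ∀ α β, wt α + wt β < n → F α β = 0

lemma DegGe.mono {m n : ℕ} (h : m ≤ n) {F : Coeffs} (hF : DegGe n F) : DegGe m F :=
  fun α β hab => hF α β (by omega)

lemma DegGe.add {n : ℕ} {F G : Coeffs} (hF : DegGe n F) (hG : DegGe n G) : DegGe n (F + G) :=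
  fun α β h => by simp [hF α β h, hG α β h]

lemma DegGe.smul {n : ℕ} {F : Coeffs} (c : ℂ) (hF : DegGe n F) : DegGe n (c • F) :=
  fun α β h => by simp [hF α β h]

lemma DegGe.bracket {m n : ℕ} {F G : Coeffs} (hF : DegGe (m + 2) F) (hG : DegGe n G) :
    DegGe (m + n) (bracket F G) := by
  intro α β h
  apply bracket_eq_zero
  intro j p q _ _ _ _ hd
  by_cases h1 : dg p < m + 2
  · rw [hF _ _ h1, zero_mul]
  · rw [hG q.1 q.2 (by unfold dg at *; omega), mul_zero]

lemma bracket_congr_low {n : ℕ} {X F F' : Coeffs} (hX : DegGe 3 X)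
    (h : ∀ α β, wt α + wt β < n → F α β = F' α β) (α β : Idx) (hab : wt α + wt β < n + 1) :
    bracket X F α β = bracket X F' α β := by
  apply bracket_congr
  intro j p q _ _ _ _ hd
  by_cases h1 : dg p < 3
  · rw [hX _ _ h1]; simp
  · rw [h q.1 q.2 (by unfold dg at *; omega)]

/-- Truncation to degrees `< M`. -/
def Pt (M : ℕ) : Coeffs →ₗ[ℂ] Coeffs where
  toFun H := fun α β => if wt α + wt β < M then H α β else 0
  map_add' F G := by
    ext α β; simp only [Pi.add_apply]; split_ifs <;> simp
  map_smul' c F := by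
    ext α β; simp only [Pi.smul_apply, RingHom.id_apply]; split_ifs <;> simp

lemma Pt_apply (M : ℕ) (H : Coeffs) (α β : Idx) :
    Pt M H α β = if wt α + wt β < M then H α β else 0 := rfl

/-- Truncated adjoint action. -/
noncomputable def aop (M : ℕ) : Coeffs →ₗ[ℂ] Module.End ℂ Coeffs where
  toFun X := Pt M ∘ₗ Bk X
  map_add' X Y := by rw [map_add, LinearMap.comp_add]
  map_smul' c X := by rw [map_smul, LinearMap.comp_smul]; rfl

lemma aop_apply (M : ℕ) (X H : Coeffs) (α β : Idx) :
    aop M X H α β = if wt α + wt β < M then bracket X H α β else 0 := rfl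

lemma aop_mul {M : ℕ} {X : Coeffs} (Y : Coeffs) (hX : DegGe 3 X) (H : Coeffs) (α β : Idx) :
    (aop M X * aop M Y) H α β =
      if wt α + wt β < M then bracket X (bracket Y H) α β else 0 := by
  rw [Module.End.mul_apply, aop_apply]
  split_ifs with h
  · apply bracket_congr_low (n := M) hX _ _ _ (by omega)
    intro α β h
    rw [aop_apply, if_pos h]
  · rfl

lemma aop_comm {M : ℕ} {X Y : Coeffs} (hX : DegGe 3 X) (hY : DegGe 3 Y) :
    aop M X * aop M Y - aop M Y * aop M X = aop M (bracket X Y) := by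
  ext H α β
  rw [LinearMap.sub_apply, Pi.sub_apply, Pi.sub_apply, aop_mul _ hX, aop_mul _ hY, aop_apply,
    ← jacobi']
  split_ifs <;> simp

/-- The Euler operator. -/
noncomputable def Eop : Module.End ℂ Coeffs where
  toFun H := fun α β => (((wt α + wt β : ℕ) : ℂ) - 2) * H α β
  map_add' F G := by ext α β; simp only [Pi.add_apply]; ring
  map_smul' c F := by
    ext α β; simp only [Pi.smul_apply, RingHom.id_apply, smul_eq_mul]; ring

lemma Eop_apply (H : Coeffs) (α β : Idx) :
    Eop H α β = (((wt α + wt β : ℕ) : ℂ) - 2) * H α β := rfl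

lemma Eop_bracket (X H : Coeffs) :
    Eop (bracket X H) = bracket (Eop X) H + bracket X (Eop H) := by
  ext α β
  rw [Eop_apply, Pi.add_apply, Pi.add_apply, bracket_eq, bracket_eq, bracket_eq, ← mul_add,
    ← Finset.sum_add_distrib, mul_left_comm, Finset.mul_sum]
  congr 1
  refine Finset.sum_congr rfl fun x hx => ?_
  simp only [Set.Finite.mem_toFinset] at hx
  have h := congrArg (Nat.cast : ℕ → ℂ) (bset_dg hx)
  unfold dg at h
  simp only [Eop_apply]
  push_cast at h ⊢
  linear_combination (X x.2.1.1 x.2.1.2 * H x.2.2.1 x.2.2.2 * cf x.1 x.2.1 x.2.2) * h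

lemma aop_Eop (M : ℕ) (X : Coeffs) :
    aop M X * Eop - Eop * aop M X = aop M (- Eop X) := by
  rw [map_neg]
  ext H α β
  have h := congrFun (congrFun (Eop_bracket X H) α) β
  simp only [LinearMap.sub_apply, Pi.sub_apply, Module.End.mul_apply, aop_apply, Eop_apply,
    LinearMap.neg_apply, Pi.neg_apply, Pi.add_apply] at h ⊢
  split_ifs
  · rw [h]; ring
  · simp

/-- The inner operators. -/
noncomputable def Inn (M : ℕ) : Submodule ℚ (Module.End ℂ Coeffs) where
  carrier := {T | ∃ X, DegGe 3 X ∧ aop M X = T}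
  add_mem' := by
    rintro _ _ ⟨X, hX, rfl⟩ ⟨Y, hY, rfl⟩
    exact ⟨X + Y, hX.add hY, map_add _ _ _⟩
  zero_mem' := ⟨0, fun _ _ _ => rfl, map_zero _⟩
  smul_mem' := by
    rintro c _ ⟨X, hX, rfl⟩
    refine ⟨(c : ℂ) • X, hX.smul _, ?_⟩
    rw [map_smul]
    ext H α β
    simp [Rat.smul_def]

lemma Inn_comm {M : ℕ} {X : Coeffs} (hX : DegGe 3 X) {T : Module.End ℂ Coeffs} (hT : T ∈ Inn M) :
    aop M X * T - T * aop M X ∈ Inn M := by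
  obtain ⟨Y, hY, rfl⟩ := hT
  exact ⟨bracket X Y, (DegGe.bracket (m := 1) (n := 3) hX hY).mono (by omega),
    (aop_comm hX hY).symm⟩

lemma Inn_Eop {M : ℕ} {X : Coeffs} (hX : DegGe 3 X) :
    aop M X * Eop - Eop * aop M X ∈ Inn M := by
  refine ⟨_, ?_, (aop_Eop M X).symm⟩
  intro α β h
  simp [Eop_apply, hX α β h]

lemma aop_deg {M n : ℕ} {X H : Coeffs} (hX : DegGe 3 X) (hH : DegGe n H) :
    DegGe (n + 1) (aop M X H) := by
  intro α β h
  rw [aop_apply, DegGe.bracket (m := 1) hX hH α β (by omega)]; simp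

lemma aop_pow_deg {M n : ℕ} {X H : Coeffs} (hX : DegGe 3 X) (hH : DegGe n H) (k : ℕ) :
    DegGe (n + k) ((aop M X ^ k) H) := by
  induction k with
  | zero => simpa using hH
  | succ k ih =>
    rw [pow_succ', Module.End.mul_apply]
    exact aop_deg hX ih

lemma aop_pow {M : ℕ} {X : Coeffs} (hX : DegGe 3 X) : aop M X ^ (M + 1) = 0 := by
  ext H α β
  have hd := aop_pow_deg (M := M) (n := 0) (H := H) hX (fun _ _ h => absurd h (by omega)) (M + 1)
  by_cases h : wt α + wt β < M
  · exact hd α β (by omega)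
  · rw [pow_succ', Module.End.mul_apply, aop_apply, if_neg h]; rfl

lemma aop_nilp {M : ℕ} {X : Coeffs} (hX : DegGe 3 X) : IsNilpotent (aop M X) :=
  ⟨M + 1, aop_pow hX⟩

/-! ### Conjugation by exponentials -/

lemma exp_mulRight {A : Type*} [Ring A] [Algebra ℚ A] {a : A} (ha : IsNilpotent a) (x : A) :
    IsNilpotent.exp (LinearMap.mulRight ℚ a) x = x * IsNilpotent.exp a := by
  obtain ⟨k, hk⟩ := ha
  have hk' : (LinearMap.mulRight ℚ a) ^ k = 0 := by
    rw [LinearMap.pow_mulRight, hk]; ext; simp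
  rw [IsNilpotent.exp_eq_sum hk, IsNilpotent.exp_eq_sum hk', LinearMap.sum_apply, Finset.mul_sum]
  refine Finset.sum_congr rfl fun i _ => ?_
  rw [LinearMap.smul_apply, LinearMap.pow_mulRight, LinearMap.mulRight_apply, mul_smul_comm]

lemma exp_mulLeft {A : Type*} [Ring A] [Algebra ℚ A] {a : A} (ha : IsNilpotent a) (x : A) :
    IsNilpotent.exp (LinearMap.mulLeft ℚ a) x = IsNilpotent.exp a * x := by
  obtain ⟨k, hk⟩ := ha
  have hk' : (LinearMap.mulLeft ℚ a) ^ k = 0 := by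
    rw [LinearMap.pow_mulLeft, hk]; ext; simp
  rw [IsNilpotent.exp_eq_sum hk, IsNilpotent.exp_eq_sum hk', LinearMap.sum_apply, Finset.sum_mul]
  refine Finset.sum_congr rfl fun i _ => ?_
  rw [LinearMap.smul_apply, LinearMap.pow_mulLeft, LinearMap.mulLeft_apply, smul_mul_assoc]

lemma exp_conj {A : Type*} [Ring A] [Algebra ℚ A] (I : Submodule ℚ A) {a : A}
    (ha : IsNilpotent a) (hI : ∀ T ∈ I, a * T - T * a ∈ I) {T : A} (hT : a * T - T * a ∈ I) :
    ∃ i ∈ I, IsNilpotent.exp a * T = (T + i) * IsNilpotent.exp a := by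
  set L := LinearMap.mulLeft ℚ a with hL
  set R := LinearMap.mulRight ℚ (-a) with hR
  have hLn : IsNilpotent L := by
    obtain ⟨k, hk⟩ := ha
    exact ⟨k, by rw [LinearMap.pow_mulLeft, hk]; ext; simp⟩
  have hRn : IsNilpotent R := by
    obtain ⟨k, hk⟩ := ha.neg
    exact ⟨k, by rw [LinearMap.pow_mulRight, hk]; ext; simp⟩
  have hc : Commute L R := LinearMap.commute_mulLeft_right a (-a)
  have he := IsNilpotent.exp_add_of_commute hc hLn hRn
  have h1 : IsNilpotent.exp (L + R) T = IsNilpotent.exp a * T * IsNilpotent.exp (-a) := by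
    rw [he, Module.End.mul_apply, exp_mulRight ha.neg, exp_mulLeft ha, mul_assoc]
  obtain ⟨k, hk⟩ := hc.isNilpotent_add hLn hRn
  have hk' : (L + R) ^ (k + 1) = 0 := by rw [pow_succ, hk, zero_mul]
  have hLR : ∀ x, (L + R) x = a * x - x * a := by
    intro x; simp [hL, hR, sub_eq_add_neg]
  rw [IsNilpotent.exp_eq_sum hk', Finset.sum_range_succ'] at h1
  have hpow : ∀ i, ((L + R) ^ (i + 1)) T ∈ I := by
    intro i
    induction i with
    | zero => rw [zero_add, pow_one, hLR]; exact hT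
    | succ i ih => rw [pow_succ', Module.End.mul_apply, hLR]; exact hI _ ih
  refine ⟨(∑ i ∈ Finset.range k, ((i + 1).factorial : ℚ)⁻¹ • (L + R) ^ (i + 1)) T, ?_, ?_⟩
  · rw [LinearMap.sum_apply]
    exact Submodule.sum_mem _ fun i _ => I.smul_mem _ (hpow i)
  · rw [LinearMap.add_apply] at h1
    have h2 := congrArg (· * IsNilpotent.exp a) h1
    simp only [mul_assoc, IsNilpotent.exp_neg_mul_exp_self ha, mul_one] at h2
    rw [← h2]
    simp [add_comm]

/-! ### The truncated exponential -/

/-- Truncated exponential. -/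
noncomputable def Ux (M : ℕ) (X : Coeffs) : Module.End ℂ Coeffs := IsNilpotent.exp (aop M X)

lemma Ux_eq {M : ℕ} {X : Coeffs} (hX : DegGe 3 X) (H : Coeffs) (α β : Idx) :
    Ux M X H α β = ∑ k ∈ Finset.range (M + 1), ((k.factorial : ℂ))⁻¹ * (aop M X ^ k) H α β := by
  unfold Ux
  rw [IsNilpotent.exp_eq_sum (aop_pow hX), LinearMap.sum_apply, Finset.sum_apply,
    Finset.sum_apply]
  refine Finset.sum_congr rfl fun k _ => ?_
  simp [Rat.smul_def]

lemma aop_pow_eq {M : ℕ} {X : Coeffs} (hX : DegGe 3 X) (H : Coeffs) (k : ℕ) :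
    ∀ α β, wt α + wt β < M → (aop M X ^ k) H α β = adPow X k H α β := by
  induction k with
  | zero => intro α β _; simp [adPow]
  | succ k ih =>
    intro α β h
    rw [pow_succ', Module.End.mul_apply, aop_apply, if_pos h, adPow]
    exact bracket_congr_low hX ih α β (by omega)

lemma Ux_expAd {M : ℕ} {X : Coeffs} (hX : DegGe 3 X) (H : Coeffs) (α β : Idx)
    (h : wt α + wt β < M) : Ux M X H α β = expAd X H α β := by
  rw [Ux_eq hX]
  unfold expAd
  have hs : ∀ k, M < k → adPow X k H α β = 0 := by
    intro k hk
    have hd : DegGe (0 + k) (adPow X k H) := by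
      clear hk
      induction k with
      | zero => intro _ _ h; omega
      | succ k ih =>
        exact (DegGe.bracket (m := 1) hX ih).mono (by omega)
    exact hd α β (by omega)
  rw [finsum_eq_sum_of_support_subset (s := Finset.range (M + 1))]
  · exact Finset.sum_congr rfl fun k _ => by rw [aop_pow_eq hX H k α β h]
  · intro k hk
    by_contra hc
    apply hk
    show _ * _ = _
    rw [hs k (by simpa using hc), mul_zero]

lemma Ux_deg {M n : ℕ} {X H : Coeffs} (hX : DegGe 3 X) (hH : DegGe n H) :
    DegGe (n + 1) (Ux M X H - H) := by
  intro α β h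
  rw [Pi.sub_apply, Pi.sub_apply, Ux_eq hX, Finset.sum_range_succ', Finset.sum_eq_zero]
  · simp
  · intro k _
    rw [aop_pow_deg hX hH (k + 1) α β (by omega), mul_zero]

/-- The composite transformation and its logarithmic derivative along the Euler operator. -/
lemma exists_V (M : ℕ) {G S : Coeffs} (hG : DegGe 3 G) (hS : DegGe 3 S) :
    ∃ V, DegGe 3 V ∧ (Ux M G * Ux M S) * Eop = (Eop + aop M V) * (Ux M G * Ux M S) := by
  obtain ⟨i1, hi1, h1⟩ := exp_conj (Inn M) (aop_nilp hS) (fun T hT => Inn_comm hS hT) (Inn_Eop hS)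
  obtain ⟨i2, hi2, h2⟩ := exp_conj (Inn M) (aop_nilp hG) (fun T hT => Inn_comm hG hT) (Inn_Eop hG)
  obtain ⟨i3, hi3, h3⟩ := exp_conj (Inn M) (aop_nilp hG) (fun T hT => Inn_comm hG hT)
    (Inn_comm hG hi1)
  obtain ⟨V, hV, hVe⟩ := (Inn M).add_mem hi2 ((Inn M).add_mem hi1 hi3)
  refine ⟨V, hV, ?_⟩
  rw [hVe]
  change Ux M S * Eop = (Eop + i1) * Ux M S at h1
  change Ux M G * Eop = (Eop + i2) * Ux M G at h2
  change Ux M G * i1 = (i1 + i3) * Ux M G at h3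
  rw [mul_assoc, h1, ← mul_assoc, mul_add, h2, h3]
  noncomm_ring

/-! ### Action of `D_ω` -/

lemma Dom_single (ω : ℤ → ℝ) (j : ℤ) :
    Dom ω (Finsupp.single j 1) (Finsupp.single j 1) = ω j := by
  unfold Dom
  rw [finsum_eq_single _ j]
  · simp
  · intro k hk
    rw [if_neg]
    rintro ⟨h, _⟩
    exact hk ((Finsupp.single_left_injective one_ne_zero) h).symm

lemma Dom_ne {ω : ℤ → ℝ} {α β : Idx} (h : Dom ω α β ≠ 0) :
    ∃ j, α = Finsupp.single j 1 ∧ β = Finsupp.single j 1 := by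
  by_contra hc
  push Not at hc
  apply h
  unfold Dom
  refine finsum_eq_zero_of_forall_eq_zero fun j => ?_
  rw [if_neg]
  rintro ⟨h1, h2⟩
  exact hc j h1 h2

lemma Dom_deg {ω : ℤ → ℝ} {α β : Idx} (h : wt α + wt β ≠ 2) : Dom ω α β = 0 := by
  by_contra hc
  obtain ⟨j, rfl, rfl⟩ := Dom_ne hc
  rw [wt_single] at h
  omega

lemma Dom_diag {ω : ℤ → ℝ} {α β : Idx} (h : α ≠ β) : Dom ω α β = 0 := by
  by_contra hc
  obtain ⟨j, rfl, rfl⟩ := Dom_ne hc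
  exact h rfl

lemma bracket_Dom (ω : ℤ → ℝ) (V : Coeffs) {α β : Idx} (hm : mom α β = 0) :
    bracket V (Dom ω) α β = Complex.I * ∑ j ∈ α.support ∪ β.support,
      V α β * ω j * ((α j : ℂ) - (β j : ℂ)) := by
  classical
  unfold bracket
  rw [finsum_eq_sum_of_support_subset (s := (α.support ∪ β.support).image fun j =>
    (j, (α, β), (Finsupp.single j 1, Finsupp.single j 1)))]
  · rw [Finset.sum_image (by intro a _ b _ h; exact (Prod.ext_iff.1 h).1)]
    congr 1
    refine Finset.sum_congr rfl fun j _ => ?_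
    have : mom (Finsupp.single j 1) (Finsupp.single j 1) = 0 := by simp [mom_eq]
    simp [bracketTerm, hm, this, Dom_single]
  · rintro ⟨j, ⟨a1, b1⟩, ⟨a2, b2⟩⟩ hx
    have hx' : bracketTerm V (Dom ω) α β (j, (a1, b1), (a2, b2)) ≠ 0 := hx
    unfold bracketTerm at hx'
    split_ifs at hx' with h
    · have h1 := right_ne_zero_of_mul (left_ne_zero_of_mul hx')
      have h2 := right_ne_zero_of_mul hx'
      obtain ⟨i, hi1, hi2⟩ := Dom_ne h1
      simp only at hi1 hi2 h h2
      subst hi1 hi2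
      by_cases hij : i = j
      · subst hij
        obtain ⟨-, -, h3, h4⟩ := h
        rw [add_tsub_cancel_right] at h3 h4
        subst h3 h4
        simp only [Finset.coe_image, Set.mem_image]
        refine ⟨i, ?_, rfl⟩
        simp only [Finset.coe_union, Set.mem_union, Finset.mem_coe, Finsupp.mem_support_iff]
        by_contra hc
        push Not at hc
        apply h2
        simp [hc.1, hc.2]
      · exfalso
        apply h2
        simp [hij]
    · exact absurd rfl hx'

lemma bracket_Dom_diag (ω : ℤ → ℝ) (V : Coeffs) (α : Idx) : bracket V (Dom ω) α α = 0 := by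
  rw [bracket_Dom ω V (by simp [mom_eq])]
  simp

lemma bracket_Dom_off {ω : ℤ → ℝ} (hω : NonResonant ω) {V : Coeffs} {α β : Idx}
    (hm : mom α β = 0) (hab : α ≠ β) (h : bracket V (Dom ω) α β = 0) : V α β = 0 := by
  classical
  rw [bracket_Dom ω V hm] at h
  have h1 := (mul_eq_zero.1 h).resolve_left Complex.I_ne_zero
  simp only [mul_assoc, ← Finset.mul_sum] at h1
  refine (mul_eq_zero.1 h1).resolve_right fun h2 => ?_
  let ℓ : ℤ →₀ ℤ := α.mapRange (fun n : ℕ => (n : ℤ)) rfl - β.mapRange (fun n : ℕ => (n : ℤ)) rfl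
  have hℓj : ∀ j, ℓ j = (α j : ℤ) - β j := fun j => by simp [ℓ]
  apply hω ℓ
  · intro h0
    apply hab
    ext j
    have := hℓj j
    rw [h0, Finsupp.zero_apply] at this
    omega
  · rw [Finsupp.sum_of_support_subset ℓ (s := α.support ∪ β.support)]
    · have h3 : ((∑ j ∈ α.support ∪ β.support, ω j * ((ℓ j : ℤ) : ℝ) : ℝ) : ℂ) = 0 := by
        rw [← h2]
        push_cast
        refine Finset.sum_congr rfl fun j _ => ?_
        rw [hℓj]; push_cast; ring
      exact_mod_cast h3
    · intro j hj
      rw [Finsupp.mem_support_iff, hℓj] at hj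
      simp only [Finset.mem_union, Finsupp.mem_support_iff]
      omega
    · intro j _; simp

/-! ### The main induction -/

/-- Auxiliary inverse of the shifted Euler operator. -/
noncomputable def wsh (s : ℕ) (x : Coeffs) : Coeffs := fun α β =>
  if wt α + wt β = s then 0 else x α β / (((wt α + wt β : ℕ) : ℂ) - s)

lemma key_formula {M : ℕ} {Φ : Module.End ℂ Coeffs} {V : Coeffs}
    (hdeg : ∀ n H, DegGe n H → DegGe (n + 1) (Φ H - H))
    (hE : Φ * Eop = (Eop + aop M V) * Φ) (x : Coeffs) (α β : Idx) (hM : wt α + wt β < M) :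
    Φ x α β = x α β + bracket V (Φ (wsh (wt α + wt β) x)) α β := by
  set s := wt α + wt β with hs
  set w := wsh s x with hw
  let xs : Coeffs := fun a b => if wt a + wt b = s then x a b else 0
  have hx : x = xs + (Eop w - ((s : ℂ) - 2) • w) := by
    ext a b
    simp only [Pi.add_apply, Pi.sub_apply, Pi.smul_apply, smul_eq_mul, Eop_apply, hw, wsh, xs]
    split_ifs with h
    · simp
    · have : ((wt a + wt b : ℕ) : ℂ) - s ≠ 0 := by
        rw [sub_ne_zero]; exact_mod_cast h
      field_simp
      ring
  have h1 : Φ xs α β = x α β := by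
    have hd : DegGe s xs := fun a b h => if_neg (by omega)
    have := hdeg s xs hd α β (by omega)
    rw [Pi.sub_apply, Pi.sub_apply, sub_eq_zero] at this
    rw [this]
    exact if_pos rfl
  have h2 : Φ (Eop w) = Eop (Φ w) + aop M V (Φ w) := by
    have := LinearMap.congr_fun hE w
    simpa [Module.End.mul_apply] using this
  have h3 := congrArg (fun y => Φ y α β) hx
  simp only [map_add, map_sub, map_smul, h2] at h3
  rw [h3]
  simp only [Pi.add_apply, Pi.sub_apply, Pi.smul_apply, smul_eq_mul, Eop_apply, h1, aop_apply,
    if_pos hM, ← hs]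
  ring

lemma wsh_diag {s : ℕ} {x : Coeffs} (hx : ∀ α β, α ≠ β → x α β = 0) (α β : Idx) (h : α ≠ β) :
    wsh s x α β = 0 := by
  unfold wsh; rw [hx α β h]; simp

lemma wsh_deg {n s : ℕ} {x : Coeffs} (hx : DegGe n x) : DegGe n (wsh s x) := by
  intro α β h
  unfold wsh; rw [hx α β h]; simp

lemma cf_diag (j : ℤ) {p q : Idx × Idx} (hp : p.1 = p.2) (hq : q.1 = q.2) : cf j p q = 0 := by
  unfold cf; rw [hp, hq]; ring

lemma low_order {M n : ℕ} {Φ : Module.End ℂ Coeffs} {V : Coeffs} (hV : DegGe 3 V)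
    (hdeg : ∀ n H, DegGe n H → DegGe (n + 1) (Φ H - H))
    (hE : Φ * Eop = (Eop + aop M V) * Φ)
    (hVd : ∀ α β, wt α + wt β ≤ n → wt α + wt β < M → mom α β = 0 → α ≠ β → V α β = 0)
    (s : ℕ) : ∀ x : Coeffs, DegGe 2 x → (∀ α β, α ≠ β → x α β = 0) →
      ∀ α β, wt α + wt β = s → s ≤ n → s < M → Φ x α β = x α β := by
  induction s using Nat.strong_induction_on with
  | _ s ih =>
    intro x hx2 hxd α β hs hsn hsM
    rw [key_formula hdeg hE x α β (by omega), add_eq_left]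
    apply bracket_eq_zero
    intro j p q hp hq _ hc hd
    by_cases h1 : dg p < 3
    · rw [hV _ _ h1, zero_mul]
    have hq' : dg q < s := by omega
    rw [ih (dg q) hq' _ (wsh_deg hx2) (wsh_diag hxd) q.1 q.2 rfl (by omega) (by omega)]
    by_cases h2 : dg q < 2
    · rw [wsh_deg hx2 _ _ h2, mul_zero]
    by_cases hqd : q.1 = q.2
    · by_cases hpd : p.1 = p.2
      · exact absurd (cf_diag j hpd hqd) hc
      · rw [hVd p.1 p.2 (by unfold dg at *; omega) (by unfold dg at *; omega) hp hpd, zero_mul]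
    · rw [wsh_diag hxd _ _ hqd, mul_zero]

lemma crit_order {M n : ℕ} (hn : 1 ≤ n) {Φ : Module.End ℂ Coeffs} {V : Coeffs} (hV : DegGe 3 V)
    (hdeg : ∀ n H, DegGe n H → DegGe (n + 1) (Φ H - H))
    (hE : Φ * Eop = (Eop + aop M V) * Φ)
    (hVd : ∀ α β, wt α + wt β ≤ n + 1 → wt α + wt β < M → mom α β = 0 → α ≠ β → V α β = 0)
    (ω : ℤ → ℝ) (W : Coeffs) (hW : DegGe 3 W) (hWd : ∀ α β, α ≠ β → W α β = 0)
    (α β : Idx) (hs : wt α + wt β = n + 2) (hM : n + 2 < M) :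
    Φ (Dom ω + W) α β = W α β - (n : ℂ)⁻¹ * bracket V (Dom ω) α β := by
  have hx2 : DegGe 2 (Dom ω + W) :=
    DegGe.add (fun a b h => Dom_deg (by omega)) (hW.mono (by omega))
  have hxd : ∀ a b, a ≠ b → (Dom ω + W) a b = 0 := fun a b h => by
    simp [Dom_diag h, hWd a b h]
  rw [key_formula hdeg hE _ α β (by omega)]
  have hb : bracket V (Φ (wsh (wt α + wt β) (Dom ω + W))) α β =
      bracket V ((-(n : ℂ)⁻¹) • Dom ω) α β := by
    apply bracket_congr
    intro j p q hp hq _ hc hd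
    by_cases h1 : dg p < 3
    · rw [hV _ _ h1]; simp
    rw [low_order hV hdeg hE hVd (dg q) _ (wsh_deg hx2) (wsh_diag hxd) q.1 q.2 rfl
      (by omega) (by omega)]
    rcases lt_trichotomy (dg q) 2 with h2 | h2 | h2
    · rw [wsh_deg hx2 _ _ h2, Pi.smul_apply, Pi.smul_apply, Dom_deg (by unfold dg at h2; omega),
        smul_zero]
    · have h2' : wt q.1 + wt q.2 = 2 := h2
      congr 2
      unfold wsh
      rw [if_neg (by omega), h2', hs, Pi.add_apply, Pi.add_apply, hW _ _ (by omega)]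
      simp only [Pi.smul_apply, smul_eq_mul, add_zero]
      push_cast
      have : ((2 : ℂ) - (n + 2)) = - n := by ring
      rw [this, div_eq_mul_inv, inv_neg]; ring
    · rw [Pi.smul_apply, Pi.smul_apply, Dom_deg (by unfold dg at h2; omega)]
      by_cases hqd : q.1 = q.2
      · by_cases hpd : p.1 = p.2
        · exact absurd (cf_diag j hpd hqd) hc
        · rw [hVd p.1 p.2 (by unfold dg at *; omega) (by unfold dg at *; omega) hp hpd]; simp
      · rw [wsh_diag hxd _ _ hqd]; simp
  have hl : bracket V ((-(n : ℂ)⁻¹) • Dom ω) = (-(n : ℂ)⁻¹) • bracket V (Dom ω) :=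
    (Bk V).map_smul _ _
  rw [hb, hl, Pi.add_apply, Pi.add_apply, Dom_deg (by omega)]
  simp only [Pi.smul_apply, smul_eq_mul]
  ring

lemma InF.deg {H : Coeffs} (h : InF H) : DegGe 2 H := by
  obtain ⟨h0, h1, h2, -, hm⟩ := h
  have one : ∀ a : Idx, wt a = 1 → ∃ j, a = Finsupp.single j 1 := by
    intro a ha
    exact (Finsupp.sum_eq_one_iff a).1 ha
  have zero : ∀ a : Idx, wt a = 0 → a = 0 := by
    intro a ha
    have : a.degree = 0 := ha
    exact (Finsupp.degree_eq_zero_iff a).1 this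
  intro α β hab
  have hc : (wt α = 0 ∧ wt β = 0) ∨ (wt α = 1 ∧ wt β = 0) ∨ (wt α = 0 ∧ wt β = 1) := by omega
  rcases hc with ⟨ha, hb⟩ | ⟨ha, hb⟩ | ⟨ha, hb⟩
  · rw [zero _ ha, zero _ hb, h0]
  · obtain ⟨j, rfl⟩ := one _ ha
    rw [zero _ hb]
    by_cases hj : j = 0
    · rw [hj, h1]
    · apply hm; rw [mom_eq, mz_single]; simpa [mz] using hj
  · obtain ⟨j, rfl⟩ := one _ hb
    rw [zero _ ha]
    by_cases hj : j = 0
    · rw [hj, h2]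
    · apply hm; rw [mom_eq, mz_single]; simpa [mz] using hj

lemma InF.sub {H K : Coeffs} (h : InF H) (k : InF K) : InF (H - K) := by
  obtain ⟨h0, h1, h2, h3, h4⟩ := h
  obtain ⟨k0, k1, k2, k3, k4⟩ := k
  refine ⟨by simp [h0, k0], by simp [h1, k1], by simp [h2, k2], fun α β => ?_, fun α β hm => ?_⟩
  · simp only [Pi.sub_apply, map_sub]
    rw [h3 α β, k3 α β]
  · simp [h4 α β hm, k4 α β hm]

/-- if `Z_H` is the Birkhoff normal form of `H = D_ω + Z + R`
and some `G ∈ 𝓕^{≥1}` conjugates `H` to `D_ω + Z' + R'` with `Z' ∈ 𝓚`,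
`R' ∈ 𝓕^{≥d₁}`, then `Z' − Z_H ∈ 𝓚 ∩ 𝓕^{≥d₁}`. -/
theorem normal_form_approximation (ω : ℤ → ℝ) (hω : NonResonant ω)
    (d d₁ : ℕ) (hd : 1 ≤ d) (Z R ZH G Z' R' : Coeffs)
    (hZK : InK Z) (hZ2 : InFge 2 Z) (hR : InFge d R)
    (hZHK : InK ZH) (hZH2 : InFge 2 ZH)
    (hZHnf : ∃ S : Coeffs, InFge 1 S ∧ expAd S (Dom ω + Z + R) = Dom ω + ZH)
    (hG : InFge 1 G) (hZ'K : InK Z') (hR' : InFge d₁ R')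
    (heq : expAd G (Dom ω + Z + R) = Dom ω + Z' + R') :
    InK (Z' - ZH) ∧ InFge d₁ (Z' - ZH) := by
  obtain ⟨S, hS, hSeq⟩ := hZHnf
  have hG3 : DegGe 3 G := hG.2
  have hS3 : DegGe 3 S := hS.2
  have hS3' : DegGe 3 (-S) := fun α β h => by simp [hS3 α β h]
  set M := d₁ + 2 with hMdef
  obtain ⟨V, hV, hE⟩ := exists_V M hG3 hS3'
  set Φ := Ux M G * Ux M (-S) with hΦ
  have hdeg : ∀ n H, DegGe n H → DegGe (n + 1) (Φ H - H) := by
    intro n H hH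
    have h1 := Ux_deg (M := M) hS3' hH
    have h2 : DegGe n (Ux M (-S) H) := by
      have := DegGe.add (h1.mono (Nat.le_succ n)) hH
      rwa [sub_add_cancel] at this
    have h3 := DegGe.add (Ux_deg (M := M) hG3 h2) h1
    rwa [sub_add_sub_cancel] at h3
  have hinv : Ux M (-S) * Ux M S = 1 := by
    unfold Ux
    rw [map_neg]
    exact IsNilpotent.exp_neg_mul_exp_self (aop_nilp hS3)
  set H := Dom ω + Z + R with hH
  -- the transformation maps the normal form to the given approximate normal form
  have hN : ∀ α β, wt α + wt β < M → Φ (Dom ω + ZH) α β = Dom ω α β + Z' α β := by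
    intro α β hab
    have h1 : DegGe M (Dom ω + ZH - Ux M S H) := by
      intro a b h
      rw [Pi.sub_apply, Pi.sub_apply, Ux_expAd hS3 H a b h, hSeq, sub_self]
    have h2 : DegGe M (Φ (Dom ω + ZH - Ux M S H)) := by
      have := DegGe.add ((hdeg M _ h1).mono (Nat.le_succ M)) h1
      rwa [sub_add_cancel] at this
    have h3 := h2 α β hab
    have h4 : Φ (Ux M S H) = Ux M G H := by
      rw [hΦ, Module.End.mul_apply, ← Module.End.mul_apply (Ux M (-S)), hinv]; rfl
    rw [map_sub, h4, Pi.sub_apply, Pi.sub_apply, sub_eq_zero, Ux_expAd hG3 H α β hab, heq] at h3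
    rw [h3]
    simp [hR'.2 α β hab]
  have hZH3 : DegGe 3 ZH := fun α β h => hZH2.2 α β (by omega)
  -- the generator is diagonal at low orders
  have hVd : ∀ n, 1 ≤ n → ∀ α β, wt α + wt β ≤ n + 1 → wt α + wt β < M → mom α β = 0 →
      α ≠ β → V α β = 0 := by
    intro n hn
    induction n, hn using Nat.le_induction with
    | base => intro α β h _ _ _; exact hV α β (by omega)
    | succ n hn ih =>
      intro α β h hM hm hne
      by_cases hlt : wt α + wt β ≤ n + 1
      · exact ih α β hlt hM hm hne
      have hc := crit_order hn hV hdeg hE ih ω ZH hZH3 hZHK.2 α β (by omega) (by omega)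
      rw [hN α β hM, Dom_diag hne, hZ'K.2 α β hne, hZHK.2 α β hne] at hc
      apply bracket_Dom_off hω hm hne
      have hn0 : (n : ℂ)⁻¹ ≠ 0 := inv_ne_zero (by exact_mod_cast (by omega : n ≠ 0))
      have h0 : (n : ℂ)⁻¹ * bracket V (Dom ω) α β = 0 := by linear_combination hc
      exact (mul_eq_zero.1 h0).resolve_left hn0
  have hF : InF (Z' - ZH) := hZ'K.1.sub hZHK.1
  refine ⟨⟨hF, fun α β h => by simp [hZ'K.2 α β h, hZHK.2 α β h]⟩, hF, fun α β hab => ?_⟩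
  rw [Pi.sub_apply, Pi.sub_apply]
  by_cases hne : α = β
  swap
  · rw [hZ'K.2 α β hne, hZHK.2 α β hne, sub_zero]
  subst hne
  have hMab : wt α + wt α < M := hab
  by_cases hlow : wt α + wt α ≤ 2
  · have hx2 : DegGe 2 (Dom ω + ZH) :=
      DegGe.add (fun a b h => Dom_deg (by omega)) (hZH3.mono (by omega))
    have hxd : ∀ a b, a ≠ b → (Dom ω + ZH) a b = 0 := fun a b h => by
      simp [Dom_diag h, hZHK.2 a b h]
    have h1 := low_order hV hdeg hE (hVd 1 le_rfl) _ _ hx2 hxd α α rfl hlow hMab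
    rw [hN α α hMab, Pi.add_apply, Pi.add_apply] at h1
    linear_combination h1
  · obtain ⟨n, hn⟩ : ∃ n, wt α + wt α = n + 2 := ⟨wt α + wt α - 2, by omega⟩
    have hn1 : 1 ≤ n := by omega
    have hc := crit_order hn1 hV hdeg hE (hVd n hn1) ω ZH hZH3 hZHK.2 α α hn (by omega)
    rw [hN α α hMab, Dom_deg (by omega), bracket_Dom_diag] at hc
    linear_combination hc
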